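/- Every (2,n)-family has at least n² + n + 1 SDRs, and this bound is attained, i.e., M(2,n) = n² + n + 1. -/

import Mathlib

open Finset

/-- Number of SDRs of the family `A`. -/
def numSDR {n : ℕ} (A : Fin n → Finset ℕ) : ℕ :=
  ((Fintype.piFinset A).filter Function.Injective).card

/-- `(t,n)`-family: every nonempty union of `k` sets has at least `k + t` elements. -/
def IsTNFamily (t : ℕ) {n : ℕ} (A : Fin n → Finset ℕ) : Prop :=
  ∀ I : Finset (Fin n), I.Nonempty → I.card + t ≤ (I.biUnion A).card

/-- Valued `(t,n)`-family with valuation `a`. -/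
def IsValuedTN (t : ℕ) {n : ℕ} (a : Fin n → ℕ) (A : Fin n → Finset ℕ) : Prop :=
  (∀ i, 0 < a i) ∧ (∀ i, (A i).card = a i + t) ∧
    ∀ I : Finset (Fin n), 2 ≤ I.card → (∑ i ∈ I, a i) + t ≤ (I.biUnion A).card

/-- `I_x = {i : x ∈ A_i}`. -/
def Ix {n : ℕ} (A : Fin n → Finset ℕ) (x : ℕ) : Finset (Fin n) :=
  Finset.univ.filter fun i => x ∈ A i

/-- `{x,y}` is exclusive. -/
def Exclusive {n : ℕ} (A : Fin n → Finset ℕ) (x y : ℕ) : Prop :=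
  (Ix A x \ Ix A y).Nonempty ∧ (Ix A y \ Ix A x).Nonempty

/-- `{x,y}` is saturated. -/
def Saturated (t : ℕ) {n : ℕ} (a : Fin n → ℕ) (A : Fin n → Finset ℕ) (x y : ℕ) : Prop :=
  ∃ I : Finset (Fin n),
    I ∩ Ix A x ∩ Ix A y = ∅ ∧ (I ∩ (Ix A x \ Ix A y)).Nonempty ∧
    (I ∩ (Ix A y \ Ix A x)).Nonempty ∧ (I.biUnion A).card = (∑ i ∈ I, a i) + t

/-- The modified family `F_y^x`: replace `x` by `y` in each `A_i` with `i ∈ I_x ∩ I_y^c`. -/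
def swapFam {n : ℕ} (A : Fin n → Finset ℕ) (x y : ℕ) : Fin n → Finset ℕ :=
  fun i => if x ∈ A i ∧ y ∉ A i then insert y (A i \ {x}) else A i

def U (t n : ℕ) : ℕ := ∑ j ∈ Finset.range (t + 1), t.choose j * n.choose j * j.factorial

/-- The extremal family `F*`: `A_i* = {i} ∪ {n+1, …, n+t}` (index `i : Fin n` stands for `i+1`). -/
def Astar (t n : ℕ) : Fin n → Finset ℕ := fun i => insert ((i : ℕ) + 1) (Finset.Ioc n (n + t))

/-- `∑_{i < j} a_i a_j`. -/
def pairSum {n : ℕ} (a : Fin n → ℕ) : ℕ :=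
  ∑ p ∈ Finset.univ.filter (fun p : Fin n × Fin n => p.1 < p.2), a p.1 * a p.2

/-- Elementary symmetric polynomial `e_k(a_1,…,a_n)`. -/
def esymm {n : ℕ} (a : Fin n → ℕ) (k : ℕ) : ℕ :=
  ∑ S ∈ Finset.univ.powersetCard k, ∏ i ∈ S, a i

/-!
Let `X` be the union of the `n` sets; by the surplus condition `X` has at least `n + 2` elements.

If it has more, two of its elements can be merged without destroying the surplus condition and
without creating new SDRs. Merging `x` and `y` fails only if some tight set of indices, one whose
union has exactly two elements more than the set itself, covers both. Distinct maximal tight sets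
are disjoint and their unions share at most one element, so if every pair were covered, these
unions would be the lines of a linear space on `X`. With weight `w = |I|`, a line has `w + 2`
points. Fix two points on a line `b`: the remaining lines through either of them cover the points
off `b` and each such line has at most `2 * w` points off `b`, so the total weight, which is at
most `n`, is at least `|X| - 2`.

If `|X| = n + 2`, every SDR misses exactly one pair `P ⊆ X`, and by Hall's theorem every pair is
missed by some SDR. At most `2 * n + 1` pairs are missed by only one: if a bipartite graph has a
unique perfect matching then each side contains a vertex of degree one, so some `x` lies in a
single `A i` and can be deleted together with `A i`, while a uniquely missed pair containing `x`
must be a subset of `A i` with one element left over. Hence there are at least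
`(n + 2) * (n + 1) - (2 * n + 1) = n ^ 2 + n + 1` SDRs.

For the extremal family an SDR is determined by the indices, if any, at which it takes the two
common values.
-/

theorem exists_perm_ne_one_forall_eq_or_eq {ι : Type*} [Finite ι] [Nonempty ι] (s : ι → ι)
    (hs : ∀ i, s i ≠ i) : ∃ π : Equiv.Perm ι, π ≠ 1 ∧ ∀ i, π i = i ∨ π i = s i := by
  classical
  -- `s` permutes its periodic points; all other points are kept fixed.
  let σ : Equiv.Perm (Function.periodicPts s) := (Function.bijOn_periodicPts s).equiv s
  have hσ : ∀ i ∈ Function.periodicPts s, σ.ofSubtype i = s i := fun _ hi =>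
    Equiv.Perm.ofSubtype_apply_of_mem σ hi
  refine ⟨σ.ofSubtype, ?_, fun i => ?_⟩
  · obtain ⟨j⟩ := ‹Nonempty ι›
    obtain ⟨a, b, hab, h⟩ : ∃ a b, a < b ∧ s^[a] j = s^[b] j :=
      Set.infinite_univ.exists_lt_map_eq_of_mapsTo (f := fun k => s^[k] j)
        (fun _ _ => Set.mem_univ _) Set.finite_univ |>.imp fun a ⟨_, b, _, h⟩ => ⟨b, h⟩
    have hper : s^[a] j ∈ Function.periodicPts s := by
      refine Function.mk_mem_periodicPts (Nat.sub_pos_of_lt hab) ?_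
      rw [Function.IsPeriodicPt, Function.IsFixedPt, ← Function.iterate_add_apply,
        Nat.sub_add_cancel hab.le, h]
    intro h1
    exact hs _ (by rw [← hσ _ hper, h1, Equiv.Perm.one_apply])
  · by_cases hi : i ∈ Function.periodicPts s
    · exact .inr (hσ i hi)
    · exact .inl (Equiv.Perm.ofSubtype_apply_of_not_mem σ hi)

variable {ι α : Type*} [DecidableEq α] {A : ι → Finset α} {P X : Finset α} {f : ι → α} {t : ℕ}
  {i : ι} {x y : α}

section SDR

variable [Fintype ι] [DecidableEq ι]

/-- The systems of distinct representatives of a family indexed by an arbitrary finite type;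
`numSDR` counts them when the index type is `Fin n`. -/
def sdrs (A : ι → Finset α) : Finset (ι → α) :=
  {f ∈ Fintype.piFinset A | Function.Injective f}

theorem mem_sdrs : f ∈ sdrs A ↔ (∀ i, f i ∈ A i) ∧ Function.Injective f := by
  rw [sdrs, mem_filter, Fintype.mem_piFinset]

theorem comp_mem_sdrs {κ : Type*} [Fintype κ] [DecidableEq κ] (hf : f ∈ sdrs A) {e : κ → ι}
    (he : Function.Injective e) : f ∘ e ∈ sdrs (A ∘ e) := by
  rw [mem_sdrs] at hf ⊢
  exact ⟨fun k => hf.1 (e k), hf.2.comp he⟩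

theorem card_sdrs_image_le {β : Type*} [DecidableEq β] (A : ι → Finset α) (φ : α → β) :
    #(sdrs fun i => (A i).image φ) ≤ #(sdrs A) := by
  refine (card_le_card fun f hf => ?_).trans (card_image_le (f := (φ ∘ ·)))
  obtain ⟨hfA, hinj⟩ := mem_sdrs.1 hf
  choose g hgA hg using fun i => mem_image.1 (hfA i)
  obtain rfl : φ ∘ g = f := funext hg
  exact mem_image_of_mem _ (mem_sdrs.2 ⟨hgA, hinj.of_comp⟩)

theorem exists_mem_sdrs_comp_val_eq (hxi : x ∈ A i) (hx : ∀ k, x ∈ A k → k = i)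
    {g : {k // k ≠ i} → α} (hg : g ∈ sdrs fun k : {k // k ≠ i} => A k) :
    ∃ f ∈ sdrs A, f ∘ Subtype.val = g := by
  rw [mem_sdrs] at hg
  have hgx : ∀ k, g k ≠ x := fun k hk => k.2 (hx _ (hk ▸ hg.1 k))
  refine ⟨fun k => if h : k = i then x else g ⟨k, h⟩, mem_sdrs.2 ⟨fun k => ?_, fun k l hkl => ?_⟩,
    funext fun k => dif_neg k.2⟩
  · by_cases h : k = i
    · simpa [h] using hxi
    · simpa [h] using hg.1 ⟨k, h⟩
  · by_cases hk : k = i <;> by_cases hl : l = i <;> simp only [hk, hl, dite_true, dite_false] at hkl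
    · rw [hk, hl]
    · exact absurd hkl.symm (hgx _)
    · exact absurd hkl (hgx _)
    · exact congrArg Subtype.val (hg.2 hkl)

theorem eq_one_of_sdrs_eq_singleton (hf : sdrs A = {f}) (π : Equiv.Perm ι)
    (hπ : ∀ i, f (π i) ∈ A i) : π = 1 := by
  have hinj : Function.Injective f := (mem_sdrs.1 (hf ▸ mem_singleton_self f)).2
  have hmem : f ∘ π ∈ sdrs A := mem_sdrs.2 ⟨hπ, hinj.comp π.injective⟩
  rw [hf, mem_singleton] at hmem
  exact Equiv.ext fun i => hinj (congrFun hmem i)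

theorem exists_forall_apply_mem_imp_eq_of_sdrs_eq_singleton [Nonempty ι] (hf : sdrs A = {f}) :
    ∃ i, ∀ k, f i ∈ A k → k = i := by
  have hfA : ∀ i, f i ∈ A i := (mem_sdrs.1 (hf ▸ mem_singleton_self f)).1
  by_contra! h
  choose s hsA hs using h
  obtain ⟨π, hπ, hπs⟩ := exists_perm_ne_one_forall_eq_or_eq s hs
  have hfπ : ∀ i, f i ∈ A (π i) := fun i => by
    rcases hπs i with h | h <;> rw [h]
    exacts [hfA i, hsA i]
  exact hπ (inv_eq_one.1 (eq_one_of_sdrs_eq_singleton hf π⁻¹ fun i => by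
    simpa using hfπ (π⁻¹ i)))

theorem exists_forall_mem_apply_imp_eq_of_sdrs_eq_singleton [Nonempty ι] (hf : sdrs A = {f}) :
    ∃ i, ∀ k, f k ∈ A i → k = i := by
  have hfA : ∀ i, f i ∈ A i := (mem_sdrs.1 (hf ▸ mem_singleton_self f)).1
  by_contra! h
  choose s hsA hs using h
  obtain ⟨π, hπ, hπs⟩ := exists_perm_ne_one_forall_eq_or_eq s hs
  refine hπ (eq_one_of_sdrs_eq_singleton hf π fun i => ?_)
  rcases hπs i with h | h <;> rw [h]
  exacts [hfA i, hsA i]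

end SDR

section Deletion

variable [Fintype ι] [DecidableEq ι]

theorem image_eq_sdiff_of_mem_sdrs (hAX : ∀ i, A i ⊆ X) (hX : #X = Fintype.card ι + t)
    (hP : P ∈ X.powersetCard t) (hf : f ∈ sdrs fun i => A i \ P) : univ.image f = X \ P := by
  obtain ⟨hfA, hinj⟩ := mem_sdrs.1 hf
  rw [mem_powersetCard] at hP
  refine eq_of_subset_of_card_le (image_subset_iff.2 fun i _ => sdiff_subset_sdiff (hAX i) le_rfl
    (hfA i)) ?_
  rw [card_sdiff_of_subset hP.1, card_image_of_injective _ hinj, hX, hP.2, card_univ,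
    Nat.add_sub_cancel]

theorem card_sdrs_eq_sum_powersetCard (hAX : ∀ i, A i ⊆ X) (hX : #X = Fintype.card ι + t) :
    #(sdrs A) = ∑ P ∈ X.powersetCard t, #(sdrs fun i => A i \ P) := by
  have hmaps : Set.MapsTo (fun f => X \ univ.image f)
      (sdrs A : Set (ι → α)) (X.powersetCard t : Set (Finset α)) := fun f hf => by
    obtain ⟨hfA, hinj⟩ := mem_sdrs.1 hf
    have hfX : univ.image f ⊆ X := image_subset_iff.2 fun i _ => hAX i (hfA i)
    refine mem_powersetCard.2 ⟨sdiff_subset, ?_⟩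
    rw [card_sdiff_of_subset hfX, card_image_of_injective _ hinj, hX, card_univ,
      Nat.add_sub_cancel_left]
  rw [card_eq_sum_card_fiberwise hmaps]
  refine sum_congr rfl fun P hP => congrArg card (Finset.ext fun f => ?_)
  rw [mem_filter]
  constructor
  · rintro ⟨hf, rfl⟩
    obtain ⟨hfA, hinj⟩ := mem_sdrs.1 hf
    exact mem_sdrs.2 ⟨fun i => by simp [hfA i], hinj⟩
  · intro hf
    refine ⟨mem_sdrs.2 ⟨fun i => sdiff_subset ((mem_sdrs.1 hf).1 i), (mem_sdrs.1 hf).2⟩, ?_⟩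
    rw [image_eq_sdiff_of_mem_sdrs hAX hX hP hf,
      Finset.sdiff_sdiff_eq_self (mem_powersetCard.1 hP).1]

/-- The `t`-subsets of a ground set `X` whose deletion leaves the family with exactly one SDR.
These are the fibres that are too small in the count `card_sdrs_eq_sum_powersetCard`. -/
def rigidSets (t : ℕ) (X : Finset α) (A : ι → Finset α) : Finset (Finset α) :=
  {P ∈ X.powersetCard t | #(sdrs fun i => A i \ P) = 1}

theorem mem_rigidSets :
    P ∈ rigidSets t X A ↔ P ∈ X.powersetCard t ∧ ∃ f, (sdrs fun i => A i \ P) = {f} := by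
  rw [rigidSets, mem_filter, card_eq_one]

theorem exists_erase_eq_of_mem_rigidSets [Nonempty ι] (hcard : ∀ i, t < #(A i))
    (hAX : ∀ i, A i ⊆ X) (hX : #X = Fintype.card ι + t) (hP : P ∈ rigidSets t X A) :
    ∃ k, ∃ z ∈ A k, (A k).erase z = P := by
  obtain ⟨hPX, f, hf⟩ := mem_rigidSets.1 hP
  obtain ⟨k, hk⟩ := exists_forall_mem_apply_imp_eq_of_sdrs_eq_singleton hf
  have hfsdr : f ∈ sdrs fun i => A i \ P := hf ▸ mem_singleton_self f
  obtain ⟨hfk, hfP⟩ := mem_sdiff.1 ((mem_sdrs.1 hfsdr).1 k)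
  have hsub : A k ⊆ insert (f k) P := fun y hy => by
    by_cases hyP : y ∈ P
    · exact mem_insert_of_mem hyP
    have hyf : y ∈ univ.image f := by
      rw [image_eq_sdiff_of_mem_sdrs hAX hX hPX hfsdr]
      exact mem_sdiff.2 ⟨hAX k hy, hyP⟩
    obtain ⟨l, -, rfl⟩ := mem_image.1 hyf
    rw [hk l (mem_sdiff.2 ⟨hy, hyP⟩)]
    exact mem_insert_self _ _
  have hAk : A k = insert (f k) P := eq_of_subset_of_card_le hsub <| by
    rw [card_insert_of_notMem hfP, (mem_powersetCard.1 hPX).2]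
    exact hcard k
  exact ⟨k, f k, hfk, by rw [hAk, erase_insert hfP]⟩

theorem card_rigidSets_filter_mem_le (hcard : ∀ i, t < #(A i)) (hAX : ∀ i, A i ⊆ X)
    (hX : #X = Fintype.card ι + t) (hxi : x ∈ A i) (hx : ∀ k, x ∈ A k → k = i) :
    #{P ∈ rigidSets t X A | x ∈ P} ≤ t := by
  have : Nonempty ι := ⟨i⟩
  have hsub : {P ∈ rigidSets t X A | x ∈ P} ⊆ ((A i).erase x).image (A i).erase := fun P hP => by
    obtain ⟨hP, hxP⟩ := mem_filter.1 hP
    obtain ⟨k, z, hz, rfl⟩ := exists_erase_eq_of_mem_rigidSets hcard hAX hX hP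
    obtain ⟨hxz, hxk⟩ := mem_erase.1 hxP
    obtain rfl := hx k hxk
    exact mem_image_of_mem _ (mem_erase.2 ⟨hxz.symm, hz⟩)
  obtain hempty | ⟨P, hP⟩ := {P ∈ rigidSets t X A | x ∈ P}.eq_empty_or_nonempty
  · simp [hempty]
  have hAi : #(A i) = t + 1 := by
    obtain ⟨z, hz, rfl⟩ := mem_image.1 (hsub hP)
    have hPX := (mem_rigidSets.1 (mem_filter.1 hP).1).1
    rw [← card_erase_add_one (mem_erase.1 hz).2, (mem_powersetCard.1 hPX).2]
  calc #{P ∈ rigidSets t X A | x ∈ P} ≤ #((A i).erase x) := (card_le_card hsub).trans card_image_le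
    _ = t := by rw [card_erase_of_mem hxi, hAi, Nat.add_sub_cancel]

theorem rigidSets_filter_notMem_subset (hxi : x ∈ A i) (hx : ∀ k, x ∈ A k → k = i) :
    {P ∈ rigidSets t X A | x ∉ P} ⊆
      rigidSets t (X.erase x) fun k : {k // k ≠ i} => A k := fun P hP => by
  obtain ⟨hP, hxP⟩ := mem_filter.1 hP
  obtain ⟨hPX, f, hf⟩ := mem_rigidSets.1 hP
  rw [mem_powersetCard] at hPX
  refine mem_rigidSets.2 ⟨mem_powersetCard.2 ⟨subset_erase.2 ⟨hPX.1, hxP⟩, hPX.2⟩,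
    f ∘ Subtype.val, eq_singleton_iff_unique_mem.2 ⟨?_, fun g hg => ?_⟩⟩
  · exact comp_mem_sdrs (A := fun i => A i \ P) (hf ▸ mem_singleton_self f) Subtype.val_injective
  · obtain ⟨f', hf', rfl⟩ := exists_mem_sdrs_comp_val_eq (A := fun i => A i \ P)
      (mem_sdiff.2 ⟨hxi, hxP⟩) (fun k hk => hx k (mem_sdiff.1 hk).1) hg
    rw [hf, mem_singleton] at hf'
    rw [hf']

theorem card_rigidSets_le (hcard : ∀ i, t < #(A i)) (hAX : ∀ i, A i ⊆ X)
    (hX : #X = Fintype.card ι + t) : #(rigidSets t X A) ≤ t * Fintype.card ι + 1 := by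
  induction hn : Fintype.card ι generalizing ι X with
  | zero =>
    calc #(rigidSets t X A) ≤ #(X.powersetCard t) := card_filter_le _ _
      _ = t * 0 + 1 := by rw [card_powersetCard, hX, hn]; simp
  | succ n ih =>
    have : Nonempty ι := Fintype.card_pos_iff.1 (by omega)
    obtain hempty | ⟨P, hP⟩ := (rigidSets t X A).eq_empty_or_nonempty
    · simp [hempty]
    obtain ⟨-, f, hf⟩ := mem_rigidSets.1 hP
    obtain ⟨i, hi⟩ := exists_forall_apply_mem_imp_eq_of_sdrs_eq_singleton hf
    obtain ⟨hxi, hxP⟩ := mem_sdiff.1 ((mem_sdrs.1 (hf ▸ mem_singleton_self f)).1 i)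
    have hx : ∀ k, f i ∈ A k → k = i := fun k hk => hi k (mem_sdiff.2 ⟨hk, hxP⟩)
    have hcard' : Fintype.card {k // k ≠ i} = n := (Set.card_ne_eq i).trans (by omega)
    have hrest := ih (A := fun k : {k // k ≠ i} => A k) (X := X.erase (f i)) (fun k => hcard k)
      (fun k => subset_erase.2 ⟨hAX k, fun h => k.2 (hx k h)⟩)
      (by rw [card_erase_of_mem (hAX i hxi)]; omega) hcard'
    calc #(rigidSets t X A)
        = #{P ∈ rigidSets t X A | f i ∈ P} + #{P ∈ rigidSets t X A | f i ∉ P} :=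
          (card_filter_add_card_filter_not _).symm
      _ ≤ t + (t * n + 1) := add_le_add (card_rigidSets_filter_mem_le hcard hAX hX hxi hx)
          ((card_le_card (rigidSets_filter_notMem_subset hxi hx)).trans hrest)
      _ = t * (n + 1) + 1 := by ring

end Deletion

/-- The `(t, n)`-family condition `IsTNFamily` for arbitrary index and element types: Hall's
condition with surplus `t`. -/
def HasSurplus (t : ℕ) (A : ι → Finset α) : Prop :=
  ∀ I : Finset ι, I.Nonempty → #I + t ≤ #(I.biUnion A)

theorem HasSurplus.lt_card (hA : HasSurplus t A) (i : ι) : t < #(A i) := by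
  have h := hA {i} (singleton_nonempty i)
  rw [card_singleton, singleton_biUnion] at h
  omega

theorem HasSurplus.sdrs_sdiff_nonempty [Fintype ι] [DecidableEq ι] (hA : HasSurplus t A)
    (hP : #P ≤ t) : (sdrs fun i => A i \ P).Nonempty := by
  have hall : ∀ I : Finset ι, #I ≤ #(I.biUnion fun i => A i \ P) := fun I => by
    obtain rfl | hI := I.eq_empty_or_nonempty
    · simp
    have hsub : I.biUnion A \ P ⊆ I.biUnion fun i => A i \ P := fun z hz => by
      simp only [mem_sdiff, mem_biUnion] at hz ⊢
      obtain ⟨⟨i, hi, hzi⟩, hzP⟩ := hz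
      exact ⟨i, hi, hzi, hzP⟩
    have hdiff := (le_card_sdiff P (I.biUnion A)).trans (card_le_card hsub)
    have hIA := hA I hI
    omega
  obtain ⟨f, hf, hfA⟩ := (all_card_le_biUnion_card_iff_exists_injective _).1 hall
  exact ⟨f, mem_sdrs.2 ⟨hfA, hf⟩⟩

theorem HasSurplus.two_mul_choose_le_card_sdrs_add [Fintype ι] [DecidableEq ι]
    (hA : HasSurplus t A) (hAX : ∀ i, A i ⊆ X) (hX : #X = Fintype.card ι + t) :
    2 * (Fintype.card ι + t).choose t ≤ #(sdrs A) + (t * Fintype.card ι + 1) := by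
  have hfibre : ∀ P ∈ X.powersetCard t,
      2 ≤ #(sdrs fun i => A i \ P) + if #(sdrs fun i => A i \ P) = 1 then 1 else 0 := fun P hP => by
    have hpos := card_pos.2 (hA.sdrs_sdiff_nonempty (mem_powersetCard.1 hP).2.le)
    split_ifs <;> omega
  calc 2 * (Fintype.card ι + t).choose t = ∑ P ∈ X.powersetCard t, 2 := by
        rw [sum_const, card_powersetCard, hX, smul_eq_mul, mul_comm]
    _ ≤ ∑ P ∈ X.powersetCard t, #(sdrs fun i => A i \ P) + #(rigidSets t X A) := by
        rw [rigidSets, card_filter, ← sum_add_distrib]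
        exact sum_le_sum hfibre
    _ ≤ #(sdrs A) + (t * Fintype.card ι + 1) := by
        rw [← card_sdrs_eq_sum_powersetCard hAX hX]
        exact Nat.add_le_add_left (card_rigidSets_le hA.lt_card hAX hX) _

section LinearSpace

variable {β : Type*} {s : Finset β} {L : β → Finset α} {w : β → ℕ}

theorem card_sdiff_line_le [DecidableEq β] (hw : ∀ b ∈ s, 1 ≤ w b) (hL : ∀ b ∈ s, #(L b) ≤ w b + 2)
    (hcover : ∀ z ∈ X, x ≠ z → ∃ b ∈ s, x ∈ L b ∧ z ∈ L b) {b : β} (hxb : x ∈ L b) :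
    #(X \ L b) ≤ 2 * ∑ c ∈ s.erase b with x ∈ L c, w c := by
  have hsub : X \ L b ⊆ {c ∈ s.erase b | x ∈ L c}.biUnion fun c => (L c).erase x := fun z hz => by
    obtain ⟨hzX, hzb⟩ := mem_sdiff.1 hz
    have hxz : x ≠ z := fun h => hzb (h ▸ hxb)
    obtain ⟨c, hc, hxc, hzc⟩ := hcover z hzX hxz
    have hcb : c ≠ b := fun h => hzb (h ▸ hzc)
    exact mem_biUnion.2 ⟨c, mem_filter.2 ⟨mem_erase.2 ⟨hcb, hc⟩, hxc⟩,
      mem_erase.2 ⟨hxz.symm, hzc⟩⟩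
  refine (card_le_card hsub).trans (card_biUnion_le.trans ?_)
  rw [mul_sum]
  -- Besides `x`, a line of weight `w ≥ 1` has at most `w + 1 ≤ 2 * w` points.
  refine sum_le_sum fun c hc => ?_
  obtain ⟨hc, hxc⟩ := mem_filter.1 hc
  have hcs := mem_of_mem_erase hc
  have hwc := hw c hcs
  have hLc := hL c hcs
  rw [card_erase_of_mem hxc]
  omega

theorem card_le_sum_weight_add_two (hw : ∀ b ∈ s, 1 ≤ w b) (hL : ∀ b ∈ s, #(L b) ≤ w b + 2)
    (hcover : ∀ x ∈ X, ∀ y ∈ X, x ≠ y → ∃ b ∈ s, x ∈ L b ∧ y ∈ L b)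
    (hunique : ∀ b ∈ s, ∀ c ∈ s, 2 ≤ #(L b ∩ L c) → b = c) : #X ≤ ∑ b ∈ s, w b + 2 := by
  classical
  by_cases hX : #X ≤ 1
  · omega
  obtain ⟨x, hx, y, hy, hxy⟩ := one_lt_card.1 (not_le.1 hX)
  obtain ⟨b, hb, hxb, hyb⟩ := hcover x hx y hy hxy
  have hxX := card_sdiff_line_le hw hL (hcover x hx) hxb
  have hyX := card_sdiff_line_le hw hL (hcover y hy) hyb
  have hdisj : Disjoint {c ∈ s.erase b | x ∈ L c} {c ∈ s.erase b | y ∈ L c} :=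
    disjoint_filter.2 fun c hc hxc hyc => (mem_erase.1 hc).1 <|
      hunique c (mem_of_mem_erase hc) b hb <|
        one_lt_card.2 ⟨x, mem_inter.2 ⟨hxc, hxb⟩, y, mem_inter.2 ⟨hyc, hyb⟩, hxy⟩
  have hsum : ∑ c ∈ s.erase b with x ∈ L c, w c + ∑ c ∈ s.erase b with y ∈ L c, w c ≤
      ∑ c ∈ s.erase b, w c := by
    rw [← sum_union hdisj]
    exact sum_le_sum_of_subset (union_subset (filter_subset _ _) (filter_subset _ _))
  have hsplit := add_sum_erase s w hb
  have hXb := card_le_card_sdiff_add_card (s := X) (t := L b)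
  have hLb := hL b hb
  omega

end LinearSpace

section Tight

variable {I J : Finset ι}

/-- A nonempty set of indices that attains equality in the surplus condition. -/
def IsTight (t : ℕ) (A : ι → Finset α) (I : Finset ι) : Prop :=
  I.Nonempty ∧ #(I.biUnion A) = #I + t

theorem IsTight.union [DecidableEq ι] (hA : HasSurplus t A) (hI : IsTight t A I)
    (hJ : IsTight t A J) (hIJ : (I ∩ J).Nonempty ∨ t ≤ #(I.biUnion A ∩ J.biUnion A)) :
    IsTight t A (I ∪ J) := by
  have hne : (I ∪ J).Nonempty := hI.1.mono subset_union_left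
  have hinter : #(I ∩ J) + t ≤ #(I.biUnion A ∩ J.biUnion A) := by
    obtain hempty | h := (I ∩ J).eq_empty_or_nonempty
    · simpa [hempty] using hIJ
    · exact (hA _ h).trans <| card_le_card <|
        subset_inter (biUnion_subset_biUnion_of_subset_left _ inter_subset_left)
          (biUnion_subset_biUnion_of_subset_left _ inter_subset_right)
  refine ⟨hne, le_antisymm ?_ (hA _ hne)⟩
  rw [union_biUnion]
  have hunionA := card_union_add_card_inter (I.biUnion A) (J.biUnion A)
  have hunion := card_union_add_card_inter I J
  have hI2 := hI.2
  have hJ2 := hJ.2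
  omega

theorem eq_of_maximal_isTight [DecidableEq ι] (hA : HasSurplus t A) (hI : Maximal (IsTight t A) I)
    (hJ : Maximal (IsTight t A) J)
    (hIJ : (I ∩ J).Nonempty ∨ t ≤ #(I.biUnion A ∩ J.biUnion A)) : I = J := by
  have hunion := hI.prop.union hA hJ.prop hIJ
  exact (hI.eq_of_le hunion subset_union_left).trans
    (hJ.eq_of_le hunion subset_union_right).symm

theorem HasSurplus.card_le_of_forall_exists_isTight [Fintype ι] (hA : HasSurplus 2 A)
    (h : ∀ x ∈ X, ∀ y ∈ X, x ≠ y → ∃ I, IsTight 2 A I ∧ x ∈ I.biUnion A ∧ y ∈ I.biUnion A) :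
    #X ≤ Fintype.card ι + 2 := by
  classical
  let M : Finset (Finset ι) := {I | Maximal (IsTight 2 A) I}
  have hM : ∀ I ∈ M, Maximal (IsTight 2 A) I := fun I hI => (mem_filter.1 hI).2
  have hsum : ∑ I ∈ M, #I ≤ Fintype.card ι * 1 := sum_card_le fun i => card_le_one.2 <| by
    simp only [mem_filter]
    rintro I ⟨hI, hiI⟩ J ⟨hJ, hiJ⟩
    exact eq_of_maximal_isTight hA (hM I hI) (hM J hJ) (.inl ⟨i, mem_inter.2 ⟨hiI, hiJ⟩⟩)
  have hX : #X ≤ ∑ I ∈ M, #I + 2 := by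
    refine card_le_sum_weight_add_two (L := fun I => I.biUnion A)
      (fun I hI => card_pos.2 (hM I hI).prop.1) (fun I hI => (hM I hI).prop.2.le)
      (fun x hx y hy hxy => ?_)
      fun I hI J hJ hIJ => eq_of_maximal_isTight hA (hM I hI) (hM J hJ) (.inr hIJ)
    obtain ⟨I, hI, hxI, hyI⟩ := h x hx y hy hxy
    obtain ⟨K, hIK, hK⟩ := Finite.exists_le_maximal hI
    have hIKA := biUnion_subset_biUnion_of_subset_left A hIK
    exact ⟨K, mem_filter.2 ⟨mem_univ K, hK⟩, hIKA hxI, hIKA hyI⟩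
  omega

end Tight

section Merge

open Function (update)

theorem injOn_update_id {s : Set α} (h : ¬ (x ∈ s ∧ y ∈ s)) :
    s.InjOn (update id x y) := by
  intro a ha b hb hab
  simp only [Function.update_apply, id] at hab
  grind

theorem card_le_card_image_update_id_add_one (S : Finset α) (x y : α) :
    #S ≤ #(S.image (update id x y)) + 1 := by
  have hsub : S.erase x ⊆ S.image (update id x y) := fun z hz =>
    mem_image.2 ⟨z, mem_of_mem_erase hz, Function.update_of_ne (ne_of_mem_erase hz) _ _⟩
  have hpred := pred_card_le_card_erase (s := S) (a := x)
  have hle := card_le_card hsub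
  omega

theorem HasSurplus.image_update_id (hA : HasSurplus t A)
    (h : ∀ I, IsTight t A I → x ∈ I.biUnion A → y ∉ I.biUnion A) :
    HasSurplus t fun i => (A i).image (update id x y) := by
  intro I hI
  rw [← biUnion_image]
  by_cases hxy : x ∈ I.biUnion A ∧ y ∈ I.biUnion A
  · have hIA := hA I hI
    have hntight : #(I.biUnion A) ≠ #I + t := fun hIt => h I ⟨hI, hIt⟩ hxy.1 hxy.2
    have hle := card_le_card_image_update_id_add_one (I.biUnion A) x y
    omega
  · rw [card_image_of_injOn (injOn_update_id hxy)]
    exact hA I hI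

theorem exists_hasSurplus_card_eq [Fintype ι] [DecidableEq ι] [Nonempty ι] (hA : HasSurplus 2 A) :
    ∃ B : ι → Finset α, HasSurplus 2 B ∧ #(univ.biUnion B) = Fintype.card ι + 2 ∧
      #(sdrs B) ≤ #(sdrs A) := by
  induction hm : #(univ.biUnion A) using Nat.strong_induction_on generalizing A with
  | _ m ih =>
  by_cases hle : #(univ.biUnion A) ≤ Fintype.card ι + 2
  · exact ⟨A, hA, hle.antisymm (hA univ univ_nonempty), le_rfl⟩
  obtain ⟨x, hx, y, hy, hxy, htight⟩ : ∃ x ∈ univ.biUnion A, ∃ y ∈ univ.biUnion A, x ≠ y ∧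
      ∀ I, IsTight 2 A I → x ∈ I.biUnion A → y ∉ I.biUnion A := by
    by_contra! h
    exact hle (hA.card_le_of_forall_exists_isTight h)
  have hlt : #(univ.biUnion fun i => (A i).image (update id x y)) < m := by
    have hsub : (univ.biUnion A).image (update id x y) ⊆ (univ.biUnion A).erase x := by
      refine image_subset_iff.2 fun z hz => mem_erase.2 ?_
      obtain rfl | hzx := eq_or_ne z x
      · rw [Function.update_self]
        exact ⟨hxy.symm, hy⟩
      · simpa [hzx] using hz
    rw [← biUnion_image, ← hm]
    exact (card_le_card hsub).trans_lt (card_erase_lt_of_mem hx)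
  obtain ⟨B, hB, hBcard, hBA⟩ := ih _ hlt (hA.image_update_id htight) rfl
  exact ⟨B, hB, hBcard, hBA.trans (card_sdrs_image_le A _)⟩

end Merge

theorem HasSurplus.sq_add_add_one_le_card_sdrs [Fintype ι] [DecidableEq ι] [Nonempty ι]
    (hA : HasSurplus 2 A) : Fintype.card ι ^ 2 + Fintype.card ι + 1 ≤ #(sdrs A) := by
  obtain ⟨B, hB, hBcard, hBA⟩ := exists_hasSurplus_card_eq hA
  have hcount := hB.two_mul_choose_le_card_sdrs_add (fun i => subset_biUnion_of_mem B (mem_univ i))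
    hBcard
  have hchoose : 2 * (Fintype.card ι + 2).choose 2 =
      (Fintype.card ι + 2) * (Fintype.card ι + 1) := by
    rw [Nat.choose_two_right]
    exact Nat.mul_div_cancel' (Nat.even_mul_pred_self _).two_dvd
  nlinarith

section Extremal

variable {n : ℕ}

theorem isTNFamily_astar (t n : ℕ) : IsTNFamily t (Astar t n) := by
  rintro I ⟨j, hj⟩
  have hsub : I.image (fun i : Fin n => (i : ℕ) + 1) ∪ Ioc n (n + t) ⊆ I.biUnion (Astar t n) :=
    union_subset (image_subset_iff.2 fun i hi => mem_biUnion.2 ⟨i, hi, mem_insert_self _ _⟩)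
      fun y hy => mem_biUnion.2 ⟨j, hj, mem_insert_of_mem hy⟩
  have hdisj : Disjoint (I.image fun i : Fin n => (i : ℕ) + 1) (Ioc n (n + t)) := by
    refine disjoint_left.2 fun y hy hy' => ?_
    obtain ⟨i, -, rfl⟩ := mem_image.1 hy
    have := (mem_Ioc.1 hy').1
    omega
  have hinj : Function.Injective fun i : Fin n => (i : ℕ) + 1 := fun i j hij =>
    Fin.ext (Nat.succ_injective hij)
  calc #I + t = #(I.image (fun i : Fin n => (i : ℕ) + 1) ∪ Ioc n (n + t)) := by
        rw [card_union_of_disjoint hdisj, card_image_of_injective _ hinj, Nat.card_Ioc,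
          Nat.add_sub_cancel_left]
    _ ≤ #(I.biUnion (Astar t n)) := card_le_card hsub

theorem injOn_partialInv_sdrs_astar_two :
    Set.InjOn (fun f => (Function.partialInv f (n + 1), Function.partialInv f (n + 2)))
      (sdrs (Astar 2 n) : Set (Fin n → ℕ)) := by
  intro f hf g hg hfg
  obtain ⟨hfA, hfinj⟩ := mem_sdrs.1 hf
  obtain ⟨hgA, hginj⟩ := mem_sdrs.1 hg
  obtain ⟨h1, h2⟩ := Prod.mk.inj hfg
  funext i
  have hiff1 : f i = n + 1 ↔ g i = n + 1 := by
    rw [← hfinj.isPartialInv, ← hginj.isPartialInv, h1]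
  have hiff2 : f i = n + 2 ↔ g i = n + 2 := by
    rw [← hfinj.isPartialInv, ← hginj.isPartialInv, h2]
  have hfi := hfA i
  have hgi := hgA i
  simp only [Astar, mem_insert, mem_Ioc] at hfi hgi
  omega

theorem card_sdrs_astar_two_le (n : ℕ) : #(sdrs (Astar 2 n)) ≤ n ^ 2 + n + 1 := by
  let D : Finset (Option (Fin n) × Option (Fin n)) := insert (none, none) univ.offDiag
  have hD : #D ≤ n ^ 2 + n + 1 := by
    refine (card_insert_le _ _).trans (Nat.succ_le_succ ?_)
    rw [offDiag_card, card_univ, Fintype.card_option, Fintype.card_fin, Nat.sub_le_iff_le_add]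
    exact le_of_eq (by ring)
  refine (card_le_card_of_injOn _ (fun f hf => ?_) injOn_partialInv_sdrs_astar_two).trans hD
  have hinj := (mem_sdrs.1 hf).2
  suffices h : Function.partialInv f (n + 1) = Function.partialInv f (n + 2) →
      Function.partialInv f (n + 1) = none by
    simp only [D, coe_insert, Set.mem_insert_iff, mem_coe, mem_offDiag, mem_univ, true_and,
      Prod.mk.injEq]
    grind
  intro h
  refine Option.eq_none_iff_forall_ne_some.2 fun i hi => ?_
  have hi1 := (hinj.isPartialInv i _).1 hi
  have hi2 := (hinj.isPartialInv i _).1 (h ▸ hi)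
  omega

end Extremal

theorem M_two_n (n : ℕ) (hn : 1 ≤ n) :
    (∀ A : Fin n → Finset ℕ, IsTNFamily 2 A → n ^ 2 + n + 1 ≤ numSDR A) ∧
      ∃ A : Fin n → Finset ℕ, IsTNFamily 2 A ∧ numSDR A = n ^ 2 + n + 1 := by
  have : Nonempty (Fin n) := ⟨⟨0, hn⟩⟩
  have lower : ∀ A : Fin n → Finset ℕ, IsTNFamily 2 A → n ^ 2 + n + 1 ≤ numSDR A := fun A hA => by
    have hcount := HasSurplus.sq_add_add_one_le_card_sdrs (A := A) hA
    rwa [Fintype.card_fin] at hcount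
  exact ⟨lower, Astar 2 n, isTNFamily_astar 2 n,
    (card_sdrs_astar_two_le n).antisymm (lower _ (isTNFamily_astar 2 n))⟩
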